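/- Let V₁ ~ χ²_J and V₂ ~ χ²_K be independent (J, K positive integers, n = J + K). Then E_{V₂}[(E_{V₁}[√(V₁+V₂) | V₂])²] = (n+J) · B((n+J)/2, (n+1)/2) / B((n+J+1)/2, n/2) · ₃F₂((n+1)/2, J/2, −1/2; (n+J+1)/2, n/2; 1). -/

import Mathlib

open Real MeasureTheory

/-- Pochhammer (rising factorial) symbol on the reals. -/
noncomputable def poch (x : ℝ) (k : ℕ) : ℝ := (ascPochhammer ℝ k).eval x

/-- Density of the chi-squared distribution with `k` degrees of freedom. -/
noncomputable def chiSqPdf (k : ℝ) (u : ℝ) : ℝ :=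
  Real.exp (-u / 2) * u ^ (k / 2 - 1) / (Real.Gamma (k / 2) * 2 ^ (k / 2))

open scoped ENNReal

theorem cv_lemma (F : ℝ → ℝ → ℝ≥0∞) (hF : Measurable (Function.uncurry F)) :
    ∫⁻ p in Set.Ioi (0:ℝ), ∫⁻ q in Set.Ioi (0:ℝ), F p q =
    ∫⁻ r in Set.Ioi (0:ℝ), ∫⁻ s in Set.Ioo (0:ℝ) 1, ENNReal.ofReal r * F (r * s) (r * (1 - s)) := by
  have h1 : ∀ r ∈ Set.Ioi (0:ℝ), ∫⁻ s in Set.Ioo (0:ℝ) 1, ENNReal.ofReal r * F (r * s) (r * (1 - s))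
      = ∫⁻ p in Set.Ioo (0:ℝ) r, F p (r - p) := by
    intro r hr
    have hr' : (0:ℝ) < r := hr
    have := lintegral_image_eq_lintegral_abs_deriv_mul (s := Set.Ioo (0:ℝ) 1) (f := fun s => r * s)
      (f' := fun _ => r) measurableSet_Ioo
      (fun x _ => by simpa using ((hasDerivAt_id x).const_mul r).hasDerivWithinAt)
      (fun x _ y _ h => mul_left_cancel₀ hr'.ne' h) (fun p => F p (r - p))
    have him : (fun s => r * s) '' Set.Ioo (0:ℝ) 1 = Set.Ioo 0 r := by
      have := Set.image_mul_left_Ioo hr' (0:ℝ) 1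
      simpa using this
    rw [him] at this
    rw [this]
    refine lintegral_congr fun s => ?_
    rw [abs_of_pos hr']
    congr 2
    ring
  rw [setLIntegral_congr_fun measurableSet_Ioi h1]
  have h2 : ∀ p : ℝ, ∫⁻ q in Set.Ioi (0:ℝ), F p q = ∫⁻ r in Set.Ioi p, F p (r - p) := by
    intro p
    rw [← lintegral_indicator measurableSet_Ioi, ← lintegral_indicator measurableSet_Ioi,
      ← lintegral_sub_right_eq_self _ p]
    refine lintegral_congr fun r => ?_
    simp [Set.indicator]
  simp_rw [h2]
  rw [← lintegral_indicator measurableSet_Ioi, ← lintegral_indicator measurableSet_Ioi]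
  have hm : MeasurableSet {x : ℝ × ℝ | 0 < x.1 ∧ x.1 < x.2} :=
    (measurableSet_lt measurable_const measurable_fst).inter
      (measurableSet_lt measurable_fst measurable_snd)
  let G : ℝ → ℝ → ℝ≥0∞ := fun p r =>
    Set.indicator {x : ℝ × ℝ | 0 < x.1 ∧ x.1 < x.2} (fun x => F x.1 (x.2 - x.1)) (p, r)
  have hG : Measurable (Function.uncurry G) := by
    refine Measurable.indicator ?_ hm
    exact hF.comp (measurable_fst.prodMk (measurable_snd.sub measurable_fst))
  have e1 : ∀ p, (Set.Ioi (0:ℝ)).indicator (fun p => ∫⁻ r in Set.Ioi p, F p (r - p)) p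
      = ∫⁻ r, G p r := by
    intro p
    by_cases hp : 0 < p
    · rw [Set.indicator_of_mem (by exact hp), ← lintegral_indicator measurableSet_Ioi]
      refine lintegral_congr fun r => ?_
      simp [G, Set.indicator, hp]
    · rw [Set.indicator_of_notMem (by exact hp)]
      simp [G, Set.indicator, hp]
  have e2 : ∀ r, (Set.Ioi (0:ℝ)).indicator (fun r => ∫⁻ p in Set.Ioo 0 r, F p (r - p)) r
      = ∫⁻ p, G p r := by
    intro r
    by_cases hp : 0 < r
    · rw [Set.indicator_of_mem (by exact hp), ← lintegral_indicator measurableSet_Ioo]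
      refine lintegral_congr fun p => ?_
      simp [G, Set.indicator]
    · rw [Set.indicator_of_notMem (by exact hp)]
      have : ∀ p, G p r = 0 := by
        intro p
        simp only [G, Set.indicator, Set.mem_ofPred_eq]
        rw [if_neg]
        rintro ⟨h, h'⟩
        exact hp (h.trans h')
      simp [this]
  rw [lintegral_congr e1, lintegral_congr e2]
  exact lintegral_lintegral_swap hG.aemeasurable

theorem beta_moment {p q : ℝ} (hp : 0 < p) (hq : 0 < q) :
    ∫⁻ t in Set.Ioo (0:ℝ) 1, ENNReal.ofReal (t ^ (p - 1) * (1 - t) ^ (q - 1)) =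
      ENNReal.ofReal (Gamma p * Gamma q / Gamma (p + q)) := by
  have h := ProbabilityTheory.lintegral_betaPDF_eq_one hp hq
  have hb := ProbabilityTheory.beta_pos hp hq
  rw [ProbabilityTheory.lintegral_betaPDF] at h
  simp_rw [mul_assoc, ENNReal.ofReal_mul (one_div_pos.2 hb).le] at h
  rw [lintegral_const_mul _ (by fun_prop)] at h
  have h3 : ENNReal.ofReal (ProbabilityTheory.beta p q) * ENNReal.ofReal (1 / ProbabilityTheory.beta p q) = 1 := by
    rw [← ENNReal.ofReal_mul hb.le, mul_one_div_cancel hb.ne', ENNReal.ofReal_one]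
  change _ = ENNReal.ofReal (ProbabilityTheory.beta p q)
  rw [← mul_one (ENNReal.ofReal (ProbabilityTheory.beta p q)), ← h, ← mul_assoc, h3, one_mul]

theorem gamma_moment {p : ℝ} (hp : 0 < p) :
    ∫⁻ t in Set.Ioi (0:ℝ), ENNReal.ofReal (exp (-t/2) * t ^ (p - 1)) =
      ENNReal.ofReal (Gamma p * 2 ^ p) := by
  have h0 : ∀ t ∈ Set.Ioi (0:ℝ), 0 ≤ exp (-t/2) * t ^ (p - 1) := fun t ht =>
    mul_nonneg (exp_pos _).le (rpow_nonneg (le_of_lt ht) _)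
  have h := Real.integral_rpow_mul_exp_neg_mul_Ioi hp (r := 1/2) (by norm_num)
  have hpos : 0 < Gamma p * 2 ^ p := mul_pos (Gamma_pos_of_pos hp) (by positivity)
  have h' : ∫ t in Set.Ioi (0:ℝ), exp (-t/2) * t ^ (p - 1) = Gamma p * 2 ^ p := by
    rw [mul_comm (Gamma p)]
    convert h using 3 with t
    · rw [mul_comm]; congr 2; ring
    · norm_num
  rw [← h', ofReal_integral_eq_lintegral_ofReal]
  · by_contra hc
    rw [integral_undef hc] at h'
    exact hpos.ne h'
  · exact ae_restrict_of_forall_mem measurableSet_Ioi h0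

theorem gamma_poch {x : ℝ} (hx : 0 < x) (l : ℕ) : Gamma (x + l) = poch x l * Gamma x := by
  induction l with
  | zero => simp [poch]
  | succ l ih =>
    rw [Nat.cast_succ, ← add_assoc, Gamma_add_one (by positivity), ih, poch, poch,
      ascPochhammer_succ_eval]
    ring

theorem poch_neg_half (l : ℕ) : poch (-(1/2)) (l+1) = -(1/2) * poch (1/2) l := by
  rw [poch, poch, ascPochhammer_succ_left]
  simp
  norm_num

theorem poch_pos {x : ℝ} (hx : 0 < x) (l : ℕ) : 0 < poch x l := ascPochhammer_pos l x hx

theorem sqrt_series {x : ℝ} (h0 : 0 < x) (h1 : x < 1) :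
    HasSum (fun l : ℕ => poch (-(1/2)) l / l.factorial * x ^ l) (√(1 - x)) := by
  have h := (Real.one_add_rpow_hasFPowerSeriesOnBall_zero (a := 1/2)).hasSum (y := -x) (by
    rw [Metric.mem_eball, edist_zero_right, enorm_neg, Real.enorm_of_nonneg h0.le]
    exact ENNReal.ofReal_lt_one.2 h1)
  have e : ((1:ℝ) + (0 + -x)) ^ (1/2:ℝ) = √(1 - x) := by
    rw [Real.sqrt_eq_rpow]; congr 1; ring
  simp only [e] at h
  have e2 : (fun l : ℕ => poch (-(1/2)) l / l.factorial * x ^ l) =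
      fun n => (binomialSeries ℝ (1 / 2 : ℝ) n) fun _ => -x := by
    funext l
    rw [binomialSeries_apply, Ring.choose_eq_smul]
    rw [Polynomial.descPochhammer_smeval_eq_ascPochhammer]
    rw [Polynomial.ascPochhammer_smeval_eq_eval, ← descPochhammer_eval_eq_ascPochhammer, poch,
      ascPochhammer_eval_neg_eq_descPochhammer]
    simp
    rw [show (-x)^l = (-1)^l * x^l by rw [← mul_pow]; simp]
    ring
  rw [e2]
  exact h

theorem swap12 (μ ν ρ : Measure ℝ) [SFinite μ] [SFinite ν] [SFinite ρ] (H : ℝ → ℝ → ℝ → ℝ≥0∞)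
    (hH : Measurable (fun x : (ℝ × ℝ) × ℝ => H x.1.1 x.1.2 x.2)) :
    ∫⁻ x, ∫⁻ y, ∫⁻ z, H x y z ∂ρ ∂ν ∂μ = ∫⁻ y, ∫⁻ x, ∫⁻ z, H x y z ∂ρ ∂μ ∂ν := by
  apply lintegral_lintegral_swap
  exact (Measurable.lintegral_prod_right' (ν := ρ) hH).aemeasurable

theorem swap23 (μ ν ρ : Measure ℝ) [SFinite μ] [SFinite ν] [SFinite ρ] (H : ℝ → ℝ → ℝ → ℝ≥0∞)
    (hH : Measurable (fun x : (ℝ × ℝ) × ℝ => H x.1.1 x.1.2 x.2)) :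
    ∫⁻ x, ∫⁻ y, ∫⁻ z, H x y z ∂ρ ∂ν ∂μ = ∫⁻ x, ∫⁻ z, ∫⁻ y, H x y z ∂ν ∂ρ ∂μ := by
  refine lintegral_congr fun x => ?_
  apply lintegral_lintegral_swap
  have : Measurable (fun p : ℝ × ℝ => ((x, p.1), p.2)) := by fun_prop
  exact (hH.comp this).aemeasurable

noncomputable def bd (a b s t : ℝ) : ℝ :=
  (s ^ (a - 1) * (1 - s) ^ (b - 1)) * (t ^ (a + b + 1/2 - 1) * (1 - t) ^ (a - 1))

theorem pointwise_id {a b T t s : ℝ} (hT : 0 < T) (ht : t ∈ Set.Ioo (0:ℝ) 1)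
    (hs : s ∈ Set.Ioo (0:ℝ) 1) :
    T * (T * t * ((√(T * (1 - t) + T * t * (1 - s)) * (exp (-(T * (1 - t)) / 2) * (T * (1 - t)) ^ (a - 1)))
      * (√(T * t * s + T * t * (1 - s)) * (exp (-(T * t * s) / 2) * (T * t * s) ^ (a - 1)))
      * (exp (-(T * t * (1 - s)) / 2) * (T * t * (1 - s)) ^ (b - 1)))) =
    (exp (-T / 2) * T ^ (2 * a + b + 1 - 1)) * (bd a b s t * √(1 - t * s)) := by
  obtain ⟨ht0, ht1⟩ := ht
  obtain ⟨hs0, hs1⟩ := hs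
  have ht' : 0 < 1 - t := by linarith
  have hs' : 0 < 1 - s := by linarith
  have e1 : √(T * (1 - t) + T * t * (1 - s)) = √T * √(1 - t * s) := by
    rw [← sqrt_mul hT.le]; congr 1; ring
  have e2 : √(T * t * s + T * t * (1 - s)) = √T * t ^ (1/2:ℝ) := by
    rw [← sqrt_eq_rpow, ← sqrt_mul hT.le]; congr 1; ring
  have e3 : exp (-T / 2) = exp (-(T * (1 - t)) / 2) * exp (-(T * t * s) / 2)
      * exp (-(T * t * (1 - s)) / 2) := by
    rw [← exp_add, ← exp_add]; congr 1; ring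
  have e4 : T ^ (2 * a + b + 1 - 1) = T * T * T * (T ^ (a - 1) * T ^ (a-1) * T ^ (b-1)) := by
    rw [show 2 * a + b + 1 - 1 = 1 + 1 + 1 + ((a-1) + (a-1) + (b-1)) by ring]
    simp only [rpow_add hT, rpow_one]
  have e5 : t ^ (a + b + 1/2 - 1) = t * (t ^ (a - 1) * t ^ (b - 1) * t ^ (1/2:ℝ)) := by
    rw [show a + b + 1/2 - 1 = 1 + ((a-1) + (b-1) + 1/2) by ring]
    simp only [rpow_add ht0, rpow_one]
  rw [e1, e2, e3, bd, e4, e5, mul_rpow hT.le ht'.le, mul_rpow (mul_pos hT ht0).le hs0.le,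
    mul_rpow (mul_pos hT ht0).le hs'.le, mul_rpow hT.le ht0.le, mul_rpow hT.le ht0.le]
  have : √T * √T = T := mul_self_sqrt hT.le
  generalize √T = q at *
  subst this
  ring

theorem main_chain (a b : ℝ) (ha : 0 < a) (hb : 0 < b) :
    ∫⁻ w in Set.Ioi (0:ℝ), (∫⁻ u in Set.Ioi (0:ℝ),
      ENNReal.ofReal (√(u + w) * (exp (-u/2) * u ^ (a - 1)))) ^ 2 *
        ENNReal.ofReal (exp (-w/2) * w ^ (b - 1)) =
    ENNReal.ofReal (Gamma (2 * a + b + 1) * 2 ^ (2 * a + b + 1)) *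
      ∫⁻ s in Set.Ioo (0:ℝ) 1, ∫⁻ t in Set.Ioo (0:ℝ) 1, ENNReal.ofReal (bd a b s t * √(1 - t * s)) := by
  let H : ℝ → ℝ → ℝ → ℝ≥0∞ := fun u v w =>
    ENNReal.ofReal (√(u + w) * (exp (-u/2) * u ^ (a - 1)))
      * ENNReal.ofReal (√(v + w) * (exp (-v/2) * v ^ (a - 1)))
      * ENNReal.ofReal (exp (-w/2) * w ^ (b - 1))
  have hH : Measurable (fun x : (ℝ × ℝ) × ℝ => H x.1.1 x.1.2 x.2) := by
    simp only [H]; fun_prop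
  have h1 : ∀ w, (∫⁻ u in Set.Ioi (0:ℝ),
      ENNReal.ofReal (√(u + w) * (exp (-u/2) * u ^ (a - 1)))) ^ 2 *
        ENNReal.ofReal (exp (-w/2) * w ^ (b - 1)) =
      ∫⁻ u in Set.Ioi (0:ℝ), ∫⁻ v in Set.Ioi (0:ℝ), H u v w := by
    intro w
    simp only [H]
    have : ∀ u, ∫⁻ v in Set.Ioi (0:ℝ), ENNReal.ofReal (√(u + w) * (exp (-u/2) * u ^ (a - 1)))
      * ENNReal.ofReal (√(v + w) * (exp (-v/2) * v ^ (a - 1)))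
      * ENNReal.ofReal (exp (-w/2) * w ^ (b - 1)) =
      ENNReal.ofReal (√(u + w) * (exp (-u/2) * u ^ (a - 1)))
      * ((∫⁻ v in Set.Ioi (0:ℝ), ENNReal.ofReal (√(v + w) * (exp (-v/2) * v ^ (a - 1))))
      * ENNReal.ofReal (exp (-w/2) * w ^ (b - 1))) := by
      intro u
      rw [lintegral_mul_const _ (by fun_prop), lintegral_const_mul _ (by fun_prop), mul_assoc]
    simp_rw [this]
    rw [lintegral_mul_const _ (by fun_prop), sq, mul_assoc]
  simp_rw [h1]
  rw [swap12 _ _ _ (fun w u v => H u v w) (by simp only [H]; fun_prop),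
    swap23 _ _ _ (fun u w v => H u v w) (by simp only [H]; fun_prop)]
  have h2 : ∀ u, ∫⁻ v in Set.Ioi (0:ℝ), ∫⁻ w in Set.Ioi (0:ℝ), H u v w =
      ∫⁻ r in Set.Ioi (0:ℝ), ∫⁻ s in Set.Ioo (0:ℝ) 1,
        ENNReal.ofReal r * H u (r * s) (r * (1 - s)) := by
    intro u
    exact cv_lemma (fun v w => H u v w) (by simp only [H, Function.uncurry_def]; fun_prop)
  simp_rw [h2]
  rw [swap23 _ _ _ (fun u r s => ENNReal.ofReal r * H u (r * s) (r * (1 - s)))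
      (by simp only [H]; fun_prop),
    swap12 _ _ _ (fun u s r => ENNReal.ofReal r * H u (r * s) (r * (1 - s)))
      (by simp only [H]; fun_prop),
    swap23 _ _ _ (fun s u r => ENNReal.ofReal r * H u (r * s) (r * (1 - s)))
      (by simp only [H]; fun_prop)]
  have h3 : ∀ s, ∫⁻ r in Set.Ioi (0:ℝ), ∫⁻ u in Set.Ioi (0:ℝ),
        ENNReal.ofReal r * H u (r * s) (r * (1 - s)) =
      ∫⁻ T in Set.Ioi (0:ℝ), ∫⁻ t in Set.Ioo (0:ℝ) 1,
        ENNReal.ofReal T * (ENNReal.ofReal (T * t) *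
          H (T * (1 - t)) (T * t * s) (T * t * (1 - s))) := by
    intro s
    exact cv_lemma (fun r u => ENNReal.ofReal r * H u (r * s) (r * (1 - s)))
      (by simp only [H, Function.uncurry_def]; fun_prop)
  simp_rw [h3]
  have h4 : ∀ s ∈ Set.Ioo (0:ℝ) 1, (∫⁻ T in Set.Ioi (0:ℝ), ∫⁻ t in Set.Ioo (0:ℝ) 1,
        ENNReal.ofReal T * (ENNReal.ofReal (T * t) *
          H (T * (1 - t)) (T * t * s) (T * t * (1 - s)))) =
      ENNReal.ofReal (Gamma (2 * a + b + 1) * 2 ^ (2 * a + b + 1)) *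
        ∫⁻ t in Set.Ioo (0:ℝ) 1, ENNReal.ofReal (bd a b s t * √(1 - t * s)) := by
    intro s hs
    rw [← gamma_moment (by positivity), ← lintegral_mul_const _ (by fun_prop)]
    refine setLIntegral_congr_fun measurableSet_Ioi fun T hT => ?_
    have hT' : (0:ℝ) < T := hT
    rw [← lintegral_const_mul _ (by unfold bd; fun_prop)]
    refine setLIntegral_congr_fun measurableSet_Ioo fun t ht => ?_
    simp only [H]
    have ht1 : 0 < 1 - t := by linarith [ht.2]
    have hs1 : 0 < 1 - s := by linarith [hs.2]
    have ht0 := ht.1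
    have hs0 := hs.1
    rw [← ENNReal.ofReal_mul (by positivity), ← ENNReal.ofReal_mul (by positivity),
      ← ENNReal.ofReal_mul (by positivity), ← ENNReal.ofReal_mul (by positivity),
      ← ENNReal.ofReal_mul (by positivity), pointwise_id hT' ht hs]
  rw [setLIntegral_congr_fun measurableSet_Ioo h4, lintegral_const_mul]
  exact Measurable.lintegral_prod_right' (ν := volume.restrict (Set.Ioo (0:ℝ) 1))
    (f := fun x : ℝ × ℝ => ENNReal.ofReal (bd a b x.1 x.2 * √(1 - x.2 * x.1)))
    (by unfold bd; fun_prop)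

noncomputable def mom (a b : ℝ) (l : ℕ) : ℝ :=
  (Gamma (a + l) * Gamma b / Gamma (a + l + b)) *
    (Gamma (a + b + 1/2 + l) * Gamma a / Gamma (a + b + 1/2 + l + a))

theorem mom_nonneg {a b : ℝ} (ha : 0 < a) (hb : 0 < b) (l : ℕ) : 0 ≤ mom a b l := by
  unfold mom
  have h : ∀ x : ℝ, 0 < x → 0 < Gamma x := fun x => Gamma_pos_of_pos
  have := h (a + l) (by positivity)
  have := h b (by positivity)
  have := h a (by positivity)
  have := h (a + l + b) (by positivity)
  have := h (a + b + 1/2 + l) (by positivity)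
  have := h (a + b + 1/2 + l + a) (by positivity)
  positivity

theorem bd_pos {a b s t : ℝ} (ht : t ∈ Set.Ioo (0:ℝ) 1)
    (hs : s ∈ Set.Ioo (0:ℝ) 1) : 0 < bd a b s t := by
  unfold bd
  have ht1 : 0 < 1 - t := by linarith [ht.2]
  have hs1 : 0 < 1 - s := by linarith [hs.2]
  have ht0 := ht.1
  have hs0 := hs.1
  positivity

theorem mom_eq {a b : ℝ} (ha : 0 < a) (hb : 0 < b) (l : ℕ) :
    ∫⁻ s in Set.Ioo (0:ℝ) 1, ∫⁻ t in Set.Ioo (0:ℝ) 1, ENNReal.ofReal (bd a b s t * (t * s) ^ l) =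
      ENNReal.ofReal (mom a b l) := by
  have h1 : ∀ s ∈ Set.Ioo (0:ℝ) 1,
      (∫⁻ t in Set.Ioo (0:ℝ) 1, ENNReal.ofReal (bd a b s t * (t * s) ^ l)) =
      ENNReal.ofReal (s ^ (a + l - 1) * (1 - s) ^ (b - 1)) *
       ENNReal.ofReal (Gamma (a + b + 1/2 + l) * Gamma a / Gamma (a + b + 1/2 + l + a)) := by
    intro s hs
    rw [← beta_moment (by positivity) ha, ← lintegral_const_mul _ (by fun_prop)]
    refine setLIntegral_congr_fun measurableSet_Ioo fun t ht => ?_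
    have ht1 : 0 < 1 - t := by linarith [ht.2]
    have hs1 : 0 < 1 - s := by linarith [hs.2]
    have ht0 := ht.1
    have hs0 := hs.1
    rw [← ENNReal.ofReal_mul (by positivity), bd, mul_pow,
      show a + l - 1 = (a - 1) + l by ring,
      show a + b + 1/2 + l - 1 = (a + b + 1/2 - 1) + l by ring,
      rpow_add_natCast hs0.ne', rpow_add_natCast ht0.ne']
    congr 1
    ring
  rw [setLIntegral_congr_fun measurableSet_Ioo h1, lintegral_mul_const _ (by fun_prop),
    beta_moment (by positivity) hb, mom, ENNReal.ofReal_mul]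
  have h : ∀ x : ℝ, 0 < x → 0 < Gamma x := fun x => Gamma_pos_of_pos
  have := h (a + l) (by positivity)
  have := h b (by positivity)
  have := h (a + l + b) (by positivity)
  positivity

noncomputable def cc (l : ℕ) : ℝ := (1/2) * poch (1/2) l / (l+1).factorial

theorem cc_nonneg (l : ℕ) : 0 ≤ cc l := by
  have := poch_pos (x := 1/2) (by norm_num) l
  unfold cc; positivity

theorem cc_eq (l : ℕ) : poch (-(1/2)) (l+1) / (l+1).factorial = - cc l := by
  rw [poch_neg_half, cc]; ring

theorem sqrt_series' {x : ℝ} (h0 : 0 < x) (h1 : x < 1) :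
    HasSum (fun l : ℕ => cc l * x ^ (l+1)) (1 - √(1 - x)) := by
  have h := (hasSum_nat_add_iff' 1).2 (sqrt_series h0 h1)
  simp only [cc_eq] at h
  have h' := h.neg
  simpa [poch] using h'

theorem D_eq {a b : ℝ} (ha : 0 < a) (hb : 0 < b) :
    (∫⁻ s in Set.Ioo (0:ℝ) 1, ∫⁻ t in Set.Ioo (0:ℝ) 1, ENNReal.ofReal (bd a b s t * √(1 - t * s)))
     + ∑' l : ℕ, ENNReal.ofReal (cc l * mom a b (l+1)) = ENNReal.ofReal (mom a b 0) := by
  have hs : ∀ l, ENNReal.ofReal (cc l * mom a b (l+1)) = ∫⁻ s in Set.Ioo (0:ℝ) 1,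
      ∫⁻ t in Set.Ioo (0:ℝ) 1, ENNReal.ofReal (cc l) * ENNReal.ofReal (bd a b s t * (t * s) ^ (l+1)) := by
    intro l
    rw [ENNReal.ofReal_mul (cc_nonneg l), ← mom_eq ha hb,
      ← lintegral_const_mul']
    · refine lintegral_congr fun s => ?_
      rw [lintegral_const_mul' _ _ ENNReal.ofReal_ne_top]
    · exact ENNReal.ofReal_ne_top
  simp_rw [hs]
  have hmeas : ∀ l : ℕ, Measurable (fun s : ℝ => ∫⁻ t in Set.Ioo (0:ℝ) 1,
      ENNReal.ofReal (cc l) * ENNReal.ofReal (bd a b s t * (t * s) ^ (l+1))) := fun l =>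
    Measurable.lintegral_prod_right' (ν := volume.restrict (Set.Ioo (0:ℝ) 1))
      (f := fun x : ℝ × ℝ => ENNReal.ofReal (cc l) * ENNReal.ofReal (bd a b x.1 x.2 * (x.2 * x.1)^(l+1)))
      (by unfold bd; fun_prop)
  rw [← lintegral_tsum (fun l => (hmeas l).aemeasurable),
    ← lintegral_add_right _ (Measurable.tsum hmeas), ← mom_eq ha hb]
  refine setLIntegral_congr_fun measurableSet_Ioo fun s hs => ?_
  have hm2 : ∀ l : ℕ, Measurable (fun t : ℝ =>
      ENNReal.ofReal (cc l) * ENNReal.ofReal (bd a b s t * (t * s) ^ (l+1))) := fun l => by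
    unfold bd; fun_prop
  rw [← lintegral_tsum (fun l => (hm2 l).aemeasurable),
    ← lintegral_add_right _ (Measurable.tsum hm2)]
  refine setLIntegral_congr_fun measurableSet_Ioo fun t ht => ?_
  have hb' := bd_pos (a := a) (b := b) ht hs
  have hx0 : 0 < t * s := mul_pos ht.1 hs.1
  have hx1 : t * s < 1 := by nlinarith [ht.1, ht.2, hs.1, hs.2]
  have hS := (sqrt_series' hx0 hx1).mul_left (bd a b s t)
  have : ∀ l, ENNReal.ofReal (cc l) * ENNReal.ofReal (bd a b s t * (t * s) ^ (l+1)) =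
     ENNReal.ofReal (bd a b s t * (cc l * (t * s) ^ (l+1))) := by
    intro l
    rw [← ENNReal.ofReal_mul (cc_nonneg l)]
    congr 1; ring
  have hn : ∀ l, 0 ≤ bd a b s t * (cc l * (t * s) ^ (l+1)) := fun l =>
    mul_nonneg hb'.le (mul_nonneg (cc_nonneg l) (pow_nonneg hx0.le _))
  simp_rw [this]
  rw [← ENNReal.ofReal_tsum_of_nonneg hn hS.summable, hS.tsum_eq, ← ENNReal.ofReal_add (by positivity)]
  · congr 1; simp; ring
  · rw [← hS.tsum_eq]; exact tsum_nonneg hn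

theorem D_eq' {a b : ℝ} (ha : 0 < a) (hb : 0 < b) :
    (∫⁻ s in Set.Ioo (0:ℝ) 1, ∫⁻ t in Set.Ioo (0:ℝ) 1, ENNReal.ofReal (bd a b s t * √(1 - t * s))) ≠ ⊤
    ∧ (∫⁻ s in Set.Ioo (0:ℝ) 1, ∫⁻ t in Set.Ioo (0:ℝ) 1,
      ENNReal.ofReal (bd a b s t * √(1 - t * s))).toReal =
        ∑' l : ℕ, poch (-(1/2)) l / l.factorial * mom a b l := by
  have h := D_eq ha hb
  generalize (∫⁻ s in Set.Ioo (0:ℝ) 1, ∫⁻ t in Set.Ioo (0:ℝ) 1,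
      ENNReal.ofReal (bd a b s t * √(1 - t * s))) = D at *
  have hn : ∀ l, 0 ≤ cc l * mom a b (l+1) := fun l => mul_nonneg (cc_nonneg l) (mom_nonneg ha hb _)
  have h1 : D ≠ ⊤ := by
    rintro rfl
    simp at h
  have h2 : ∑' l : ℕ, ENNReal.ofReal (cc l * mom a b (l+1)) ≠ ⊤ := by
    intro h2
    rw [h2] at h; simp at h
  refine ⟨h1, ?_⟩
  have h3 := ENNReal.summable_toReal h2
  simp_rw [ENNReal.toReal_ofReal (hn _)] at h3
  rw [← ENNReal.ofReal_tsum_of_nonneg hn h3] at h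
  have h4 := congrArg ENNReal.toReal h
  rw [ENNReal.toReal_add h1 ENNReal.ofReal_ne_top, ENNReal.toReal_ofReal (tsum_nonneg hn),
    ENNReal.toReal_ofReal (mom_nonneg ha hb _)] at h4
  have h5 : ∀ l, poch (-(1/2)) (l+1) / (l+1).factorial * mom a b (l+1) = -(cc l * mom a b (l+1)) := by
    intro l; rw [cc_eq]; ring
  have h6 : Summable (fun l : ℕ => poch (-(1/2)) l / l.factorial * mom a b l) := by
    rw [← summable_nat_add_iff 1]
    simp_rw [h5]
    exact h3.neg
  rw [h6.tsum_eq_zero_add]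
  simp_rw [h5]
  rw [tsum_neg]
  simp [poch]
  linarith

theorem lhs_eq (k j : ℝ) (hj : 0 < j) (hk : 0 < k) :
    (∫ v₂ in Set.Ioi (0:ℝ),
        (∫ v₁ in Set.Ioi (0:ℝ), Real.sqrt (v₁ + v₂) * chiSqPdf j v₁) ^ 2 * chiSqPdf k v₂) =
    (Gamma (2 * (j/2) + k/2 + 1) * 2 ^ (2 * (j/2) + k/2 + 1)) *
      (∑' l : ℕ, poch (-(1/2)) l / l.factorial * mom (j/2) (k/2) l) /
      ((Gamma (j/2) * 2 ^ (j/2)) ^ 2 * (Gamma (k/2) * 2 ^ (k/2))) := by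
  have ha : 0 < j/2 := by positivity
  have hb : 0 < k/2 := by positivity
  unfold chiSqPdf
  generalize j/2 = a at *
  generalize k/2 = b at *
  have hGa := Gamma_pos_of_pos ha
  have hGb := Gamma_pos_of_pos hb
  have hmain := main_chain a b ha hb
  obtain ⟨hD1, hD2⟩ := D_eq' ha hb
  let A : ℝ → ℝ≥0∞ := fun w => ∫⁻ u in Set.Ioi (0:ℝ),
      ENNReal.ofReal (√(u + w) * (exp (-u/2) * u ^ (a - 1)))
  have hA : Measurable A :=
    Measurable.lintegral_prod_right' (ν := volume.restrict (Set.Ioi (0:ℝ)))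
      (f := fun x : ℝ × ℝ => ENNReal.ofReal (√(x.2 + x.1) * (exp (-x.2/2) * x.2 ^ (a - 1))))
      (by fun_prop)
  have hin : ∀ w, (∫ u in Set.Ioi (0:ℝ), √(u + w) * (exp (-u / 2) * u ^ (a - 1) / (Gamma a * 2 ^ a)))
      = (A w).toReal / (Gamma a * 2 ^ a) := by
    intro w
    simp_rw [← mul_div_assoc]
    rw [integral_div, integral_eq_lintegral_of_nonneg_ae]
    · refine ae_restrict_of_forall_mem measurableSet_Ioi fun u hu => ?_
      have : (0:ℝ) < u := hu
      simp only [Pi.zero_apply]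
      positivity
    · exact Measurable.aestronglyMeasurable (by fun_prop)
  simp_rw [hin]
  have hm : Measurable (fun w => A w ^ 2 * ENNReal.ofReal (exp (-w/2) * w ^ (b - 1))) := by
    fun_prop
  have hout : ∀ w ∈ Set.Ioi (0:ℝ), ((A w).toReal / (Gamma a * 2 ^ a)) ^ 2 *
      (exp (-w / 2) * w ^ (b - 1) / (Gamma b * 2 ^ b)) =
      (A w ^ 2 * ENNReal.ofReal (exp (-w/2) * w ^ (b - 1))).toReal /
        ((Gamma a * 2 ^ a) ^ 2 * (Gamma b * 2 ^ b)) := by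
    intro w hw
    have : (0:ℝ) < w := hw
    rw [ENNReal.toReal_mul, ENNReal.toReal_pow, ENNReal.toReal_ofReal (by positivity)]
    field_simp
  rw [setIntegral_congr_fun measurableSet_Ioi hout, integral_div, integral_toReal hm.aemeasurable]
  · change (∫⁻ w in Set.Ioi (0:ℝ), A w ^ 2 * ENNReal.ofReal (exp (-w/2) * w ^ (b - 1))) = _ at hmain
    rw [hmain, ENNReal.toReal_mul, hD2, ENNReal.toReal_ofReal]
    have := Gamma_pos_of_pos (show 0 < 2 * a + b + 1 by positivity)
    positivity
  · refine ae_lt_top hm ?_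
    change (∫⁻ w in Set.Ioi (0:ℝ), A w ^ 2 * ENNReal.ofReal (exp (-w/2) * w ^ (b - 1))) = _ at hmain
    rw [hmain]
    exact ENNReal.mul_ne_top ENNReal.ofReal_ne_top hD1

theorem chi_sq_nested_sqrt_moment (J K : ℕ) (hJ : 0 < J) (hK : 0 < K)
    (n : ℕ) (hn : n = J + K) :
    (∫ v₂ in Set.Ioi (0:ℝ),
        (∫ v₁ in Set.Ioi (0:ℝ), Real.sqrt (v₁ + v₂) * chiSqPdf (J : ℝ) v₁) ^ 2 *
          chiSqPdf (K : ℝ) v₂) =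
      ((n : ℝ) + J) *
        ((Real.Gamma (((n : ℝ) + J) / 2) * Real.Gamma (((n : ℝ) + 1) / 2) /
            Real.Gamma (((n : ℝ) + J) / 2 + ((n : ℝ) + 1) / 2)) /
         (Real.Gamma (((n : ℝ) + (J : ℝ) + 1) / 2) * Real.Gamma ((n : ℝ) / 2) /
            Real.Gamma (((n : ℝ) + (J : ℝ) + 1) / 2 + (n : ℝ) / 2))) *
      ∑' l : ℕ,
        poch (((n : ℝ) + 1) / 2) l * poch ((J : ℝ) / 2) l * poch (-(1 / 2)) l /
          (poch (((n : ℝ) + (J : ℝ) + 1) / 2) l * poch ((n : ℝ) / 2) l * l.factorial) := by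
  have hj : (0:ℝ) < J := by exact_mod_cast hJ
  have hk : (0:ℝ) < K := by exact_mod_cast hK
  rw [lhs_eq _ _ hj hk]
  have hnr : (n:ℝ) = J + K := by rw [hn]; push_cast; rfl
  have ha : (0:ℝ) < (J:ℝ)/2 := by positivity
  have hb : (0:ℝ) < (K:ℝ)/2 := by positivity
  rw [show ((n : ℝ) + J) / 2 + ((n : ℝ) + 1) / 2 = ((n : ℝ) + (J : ℝ) + 1) / 2 + (n : ℝ) / 2 by ring,
    show (n:ℝ) + J = 2 * (2 * ((J:ℝ)/2) + (K:ℝ)/2) by rw [hnr]; ring,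
    show (n:ℝ) / 2 = (J:ℝ)/2 + (K:ℝ)/2 by rw [hnr]; ring,
    show ((n:ℝ) + 1) / 2 = (J:ℝ)/2 + (K:ℝ)/2 + 1/2 by rw [hnr]; ring]
  generalize (J:ℝ)/2 = a at *
  generalize (K:ℝ)/2 = b at *
  rw [show 2 * (2 * a + b) / 2 = 2 * a + b by ring,
    show (2 * (2 * a + b) + 1) / 2 = a + b + 1/2 + a by ring]
  have g : ∀ x : ℝ, 0 < x → 0 < Gamma x := fun x => Gamma_pos_of_pos
  have g1 := g a ha
  have g2 := g b hb
  have g3 := g (2 * a + b) (by positivity)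
  have g4 := g (a + b) (by positivity)
  have g5 := g (a + b + 1/2) (by positivity)
  have g6 := g (a + b + 1/2 + a) (by positivity)
  have g7 := g (a + b + 1/2 + a + (a + b)) (by positivity)
  have hl : ∀ l : ℕ, poch (-(1/2)) l / l.factorial * mom a b l =
      (Gamma a ^ 2 * Gamma b * Gamma (a + b + 1/2) / (Gamma (a + b) * Gamma (a + b + 1/2 + a))) *
      (poch (a + b + 1/2) l * poch a l * poch (-(1 / 2)) l /
          (poch (a + b + 1/2 + a) l * poch (a + b) l * l.factorial)) := by
    intro l
    have p1 := poch_pos (x := a + b) (by positivity) l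
    have p2 := poch_pos (x := a + b + 1/2 + a) (by positivity) l
    rw [mom, show a + l + b = a + b + l by ring, show a + b + 1/2 + l + a = a + b + 1/2 + a + l by ring,
      gamma_poch ha, gamma_poch (by positivity : 0 < a + b), gamma_poch (by positivity : 0 < a + b + 1/2),
      gamma_poch (by positivity : 0 < a + b + 1/2 + a)]
    field_simp
  simp_rw [hl]
  rw [tsum_mul_left, Gamma_add_one (by positivity : 2 * a + b ≠ 0)]
  have hp : (2:ℝ) ^ (2 * a + b + 1) = 2 * ((2 ^ a) ^ 2 * 2 ^ b) := by
    rw [rpow_add two_pos, rpow_add two_pos, rpow_one, two_mul, rpow_add two_pos]; ring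
  have q1 : (0:ℝ) < 2 ^ a := by positivity
  have q2 : (0:ℝ) < 2 ^ b := by positivity
  rw [hp]
  generalize (2:ℝ) ^ a = A at *
  generalize (2:ℝ) ^ b = B at *
  field_simp
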